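/- Let h : ℝ → ℝ be continuous and proper (|h(t)| → ∞ as |t| → ∞), and assume that no value of h is attained at three distinct points. Then there exist homeomorphisms φ, ψ : ℝ → ℝ such that the composition ψ ∘ h ∘ φ is one of the four maps s ↦ s, s ↦ −s, s ↦ |s|, s ↦ −|s|. -/

import Mathlib

open Filter

lemma aux_ivt {h : ℝ → ℝ} (hc : Continuous h) {a b v : ℝ} (hab : a < b)
    (hv : (h a < v ∧ v < h b) ∨ (h b < v ∧ v < h a)) : ∃ x, a < x ∧ x < b ∧ h x = v := by
  rcases hv with hv | hv
  · obtain ⟨x, hx, rfl⟩ := intermediate_value_Ioo hab.le hc.continuousOn hv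
    exact ⟨x, hx.1, hx.2, rfl⟩
  · obtain ⟨x, hx, rfl⟩ := intermediate_value_Ioo' hab.le hc.continuousOn hv
    exact ⟨x, hx.1, hx.2, rfl⟩

lemma aux_top {h : ℝ → ℝ} (hc : Continuous h) (ht : Tendsto h atTop atTop) {b v : ℝ}
    (hv : h b < v) : ∃ x, b < x ∧ h x = v := by
  obtain ⟨y, hy1, hy2⟩ := ((ht.eventually_gt_atTop v).and (eventually_gt_atTop b)).exists
  obtain ⟨x, h1, -, h3⟩ := aux_ivt hc hy2 (Or.inl ⟨hv, hy1⟩)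
  exact ⟨x, h1, h3⟩

lemma aux_bot {h : ℝ → ℝ} (hc : Continuous h) (ht : Tendsto h atBot atBot) {b v : ℝ}
    (hv : v < h b) : ∃ x, x < b ∧ h x = v := by
  obtain ⟨y, hy1, hy2⟩ := ((ht.eventually_lt_atBot v).and (eventually_lt_atBot b)).exists
  obtain ⟨x, h1, h2, h3⟩ := aux_ivt hc hy2 (Or.inl ⟨hy1, hv⟩)
  exact ⟨x, h2, h3⟩

lemma aux_bot' {h : ℝ → ℝ} (hc : Continuous h) (ht : Tendsto h atBot atTop) {b v : ℝ}
    (hv : h b < v) : ∃ x, x < b ∧ h x = v := by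
  obtain ⟨y, hy1, hy2⟩ := ((ht.eventually_gt_atTop v).and (eventually_lt_atBot b)).exists
  obtain ⟨x, h1, h2, h3⟩ := aux_ivt hc hy2 (Or.inr ⟨hv, hy1⟩)
  exact ⟨x, h2, h3⟩

lemma aux_lim0 {h : ℝ → ℝ} (hc : Continuous h) (ht : Tendsto (fun t => |h t|) atTop atTop)
    {N : ℝ} (hN : ∀ t, N ≤ t → 1 ≤ |h t|) (hp : 0 < h N) : Tendsto h atTop atTop := by
  refine ht.congr' ?_
  filter_upwards [eventually_gt_atTop N] with t htN
  apply abs_of_nonneg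
  by_contra hneg
  push Not at hneg
  obtain ⟨x, h1, -, h3⟩ := aux_ivt hc htN (Or.inr ⟨hneg, hp⟩)
  have := hN x h1.le
  rw [h3] at this
  norm_num at this

lemma aux_lim {h : ℝ → ℝ} (hc : Continuous h) (ht : Tendsto (fun t => |h t|) atTop atTop) :
    Tendsto h atTop atTop ∨ Tendsto h atTop atBot := by
  obtain ⟨N, hN⟩ := eventually_atTop.1 (ht.eventually_ge_atTop 1)
  rcases lt_trichotomy (h N) 0 with h0 | h0 | h0
  · right
    have := aux_lim0 (h := fun t => - h t) hc.neg (by simpa using ht) (N := N)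
      (by simpa using hN) (by simpa using h0)
    exact tendsto_neg_atTop_iff.1 this
  · have := hN N le_rfl
    rw [h0] at this
    norm_num at this
  · left
    exact aux_lim0 hc ht hN h0

lemma aux_homeo {f : ℝ → ℝ} (hc : Continuous f) (hi : Function.Injective f)
    (hs : Function.Surjective f) : ∃ e : ℝ ≃ₜ ℝ, ∀ x, e x = f x := by
  rcases hc.strictMono_of_inj hi with hm | hm
  · exact ⟨(hm.orderIsoOfSurjective f hs).toHomeomorph, fun x => rfl⟩
  · have hm' : StrictMono (fun x => - f x) := fun a b hab => neg_lt_neg (hm hab)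
    have hs' : Function.Surjective (fun x => - f x) := fun y => by
      obtain ⟨x, hx⟩ := hs (-y)
      exact ⟨x, by simp [hx]⟩
    refine ⟨(hm'.orderIsoOfSurjective _ hs').toHomeomorph.trans (Homeomorph.neg ℝ), fun x => ?_⟩
    change - (- f x) = f x
    simp

def No3 (h : ℝ → ℝ) : Prop := ∀ x y z : ℝ, x < y → y < z → h x = h y → h y = h z → False

lemma aux_mono {h : ℝ → ℝ} (hc : Continuous h) (h3 : No3 h) (ht : Tendsto h atTop atTop)
    (hb : Tendsto h atBot atBot) : ∃ e : ℝ ≃ₜ ℝ, ∀ x, e x = h x := by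
  have key : ∀ a b, a < b → h a ≠ h b := by
    intro a b hab heq
    obtain ⟨d, had, hdb⟩ := exists_between hab
    rcases lt_trichotomy (h d) (h a) with h0 | h0 | h0
    · obtain ⟨v, hv1, hv2⟩ := exists_between h0
      obtain ⟨x, hx, hx'⟩ := aux_bot hc hb hv2
      obtain ⟨y, hy, hy1, hy'⟩ := aux_ivt hc had (Or.inr ⟨hv1, hv2⟩)
      obtain ⟨z, hz, hz1, hz'⟩ := aux_ivt hc hdb (Or.inl ⟨hv1, heq ▸ hv2⟩)
      exact h3 x y z (by linarith) (by linarith) (by linarith) (by linarith)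
    · exact h3 a d b had hdb h0.symm (h0.trans heq)
    · obtain ⟨v, hv1, hv2⟩ := exists_between h0
      obtain ⟨x, hx, hx1, hx'⟩ := aux_ivt hc had (Or.inl ⟨hv1, hv2⟩)
      obtain ⟨y, hy, hy1, hy'⟩ := aux_ivt hc hdb (Or.inr ⟨heq ▸ hv1, hv2⟩)
      obtain ⟨z, hz, hz'⟩ := aux_top hc ht (heq ▸ hv1)
      exact h3 x y z (by linarith) (by linarith) (by linarith) (by linarith)
  refine aux_homeo hc (fun a b hab => ?_) (hc.surjective ht hb)
  rcases lt_trichotomy a b with h0 | h0 | h0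
  · exact absurd hab (key a b h0)
  · exact h0
  · exact absurd hab.symm (key b a h0)

lemma aux_abs {h : ℝ → ℝ} (hc : Continuous h) (h3 : No3 h) (ht : Tendsto h atTop atTop)
    (hb : Tendsto h atBot atTop) : ∃ φ ψ : ℝ ≃ₜ ℝ, ∀ s, ψ (h (φ s)) = |s| := by
  obtain ⟨p, hp⟩ := hc.exists_forall_le (β := ℝ) (by
    rw [cocompact_eq_atBot_atTop]; exact hb.sup ht)
  have uniq0 : ∀ a b, a < b → h a = h p → h b = h p → False := by
    intro a b hab ha hb'
    obtain ⟨d, had, hdb⟩ := exists_between hab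
    rcases (hp d).lt_or_eq with h0 | h0
    · obtain ⟨v, hv1, hv2⟩ := exists_between h0
      obtain ⟨x, hx, hx1, hx'⟩ := aux_ivt hc had (Or.inl ⟨ha ▸ hv1, hv2⟩)
      obtain ⟨y, hy, hy1, hy'⟩ := aux_ivt hc hdb (Or.inr ⟨hb' ▸ hv1, hv2⟩)
      obtain ⟨z, hz, hz'⟩ := aux_top hc ht (hb' ▸ hv1)
      exact h3 x y z (by linarith) (by linarith) (by linarith) (by linarith)
    · exact h3 a d b had hdb (by linarith) (by linarith)
  have uniq : ∀ a, a ≠ p → h p < h a := by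
    intro a ha
    refine (hp a).lt_of_ne fun heq => ?_
    rcases ha.lt_or_gt with h0 | h0
    · exact uniq0 a p h0 heq.symm rfl
    · exact uniq0 p a h0 rfl heq.symm
  have right : ∀ a b, p < a → a < b → h a ≠ h b := by
    intro a b ha hab heq
    obtain ⟨x, hx, hx'⟩ := aux_bot' hc hb (uniq a ha.ne')
    exact h3 x a b (by linarith) hab hx' heq
  have left : ∀ a b, a < b → b < p → h a ≠ h b := by
    intro a b hab ha heq
    obtain ⟨x, hx, hx'⟩ := aux_top hc ht (uniq b ha.ne)
    exact h3 a b x hab (by linarith) heq hx'.symm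
  let g : ℝ → ℝ := fun t => h (max t p) - h (min t p)
  have gr : ∀ t, p ≤ t → g t = h t - h p := fun t h0 => by simp [g, h0]
  have gl : ∀ t, t ≤ p → g t = h p - h t := fun t h0 => by simp [g, h0]
  have gabs : ∀ t, |g t| = h t - h p := by
    intro t
    have := hp t
    rcases le_total t p with h0 | h0
    · rw [gl t h0, abs_of_nonpos (by linarith)]; ring
    · rw [gr t h0, abs_of_nonneg (by linarith)]
  have key : ∀ a b, a < b → g a ≠ g b := by
    intro a b hab heq
    rcases lt_or_ge p a with h1 | h1
    · rw [gr a h1.le, gr b (by linarith)] at heq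
      exact right a b h1 hab (by linarith)
    · rcases lt_or_ge b p with h2 | h2
      · rw [gl a h1, gl b h2.le] at heq
        exact left a b hab h2 (by linarith)
      · rw [gl a h1, gr b h2] at heq
        have := hp a
        have := hp b
        exact uniq0 a b hab (by linarith) (by linarith)
  have hgc : Continuous g := by fun_prop
  have hgs : Function.Surjective g := by
    refine hgc.surjective ?_ ?_
    · refine (tendsto_atTop_add_const_right _ (-h p) ht).congr' ?_
      filter_upwards [eventually_ge_atTop p] with t h0
      rw [gr t h0]; ring
    · refine (tendsto_atBot_add_const_right _ (h p) (tendsto_neg_atBot_iff.2 hb)).congr' ?_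
      filter_upwards [eventually_le_atBot p] with t h0
      rw [gl t h0]; ring
  obtain ⟨e, he⟩ := aux_homeo hgc (fun a b hab => by
    rcases lt_trichotomy a b with h0 | h0 | h0
    · exact absurd hab (key a b h0)
    · exact h0
    · exact absurd hab.symm (key b a h0)) hgs
  refine ⟨e.symm, Homeomorph.addRight (-h p), fun s => ?_⟩
  change h (e.symm s) + -h p = |s|
  rw [← sub_eq_add_neg, ← gabs, ← he, e.apply_symm_apply]

/-- A continuous proper function `h : ℝ → ℝ`, no value of which is attained at three
distinct points, is equivalent, up to homeomorphisms of domain and range, to one of the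
four normal forms `s ↦ s`, `s ↦ -s`, `s ↦ |s|`, `s ↦ -|s|`. -/
theorem stmt4 (h : ℝ → ℝ) (hc : Continuous h)
    (hproper : Filter.Tendsto (fun t => |h t|) (Filter.cocompact ℝ) Filter.atTop)
    (hno3 : ¬ ∃ t₁ t₂ t₃ : ℝ, t₁ ≠ t₂ ∧ t₂ ≠ t₃ ∧ t₁ ≠ t₃ ∧ h t₁ = h t₂ ∧ h t₂ = h t₃) :
    ∃ φ ψ : ℝ ≃ₜ ℝ,
      (∀ s : ℝ, ψ (h (φ s)) = s) ∨ (∀ s : ℝ, ψ (h (φ s)) = -s) ∨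
      (∀ s : ℝ, ψ (h (φ s)) = |s|) ∨ (∀ s : ℝ, ψ (h (φ s)) = -|s|) := by
  have h3 : No3 h := fun x y z hxy hyz h1 h2 =>
    hno3 ⟨x, y, z, hxy.ne, hyz.ne, (hxy.trans hyz).ne, h1, h2⟩
  have h3' : No3 (fun t => - h t) := fun x y z hxy hyz h1 h2 =>
    h3 x y z hxy hyz (neg_injective h1) (neg_injective h2)
  rw [cocompact_eq_atBot_atTop, tendsto_sup] at hproper
  obtain ⟨hB, hT⟩ := hproper
  have hB' : Tendsto h atBot atTop ∨ Tendsto h atBot atBot := by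
    have := aux_lim (h := fun t => h (-t)) (by fun_prop) (hB.comp tendsto_neg_atTop_atBot)
    rcases this with h0 | h0
    · left; simpa [Function.comp_def] using h0.comp tendsto_neg_atBot_atTop
    · right; simpa [Function.comp_def] using h0.comp tendsto_neg_atBot_atTop
  rcases aux_lim hc hT with ht | ht <;> rcases hB' with hb | hb
  · obtain ⟨φ, ψ, H⟩ := aux_abs hc h3 ht hb
    exact ⟨φ, ψ, Or.inr (Or.inr (Or.inl H))⟩
  · obtain ⟨e, he⟩ := aux_mono hc h3 ht hb
    exact ⟨Homeomorph.refl ℝ, e.symm, Or.inl fun s => by simp [← he]⟩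
  · obtain ⟨e, he⟩ := aux_mono hc.neg h3' (tendsto_neg_atTop_iff.2 ht) (tendsto_neg_atBot_iff.2 hb)
    refine ⟨e.symm, Homeomorph.refl ℝ, Or.inr (Or.inl fun s => ?_)⟩
    have := he (e.symm s)
    rw [e.apply_symm_apply] at this
    change s = - h (e.symm s) at this
    change h (e.symm s) = -s
    linarith
  · obtain ⟨φ, ψ, H⟩ := aux_abs hc.neg h3' (tendsto_neg_atTop_iff.2 ht) (tendsto_neg_atTop_iff.2 hb)
    refine ⟨φ, ((Homeomorph.neg ℝ).trans ψ).trans (Homeomorph.neg ℝ),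
      Or.inr (Or.inr (Or.inr fun s => ?_))⟩
    rw [← H s]
    rfl
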